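/- For every w ∈ bD and every z in the closure of D with z ≠ w, one has Re Δ(w,z) > 0; in particular the Cauchy–Leray denominator Δ(w,z) is nonzero whenever w ∈ bD and z ∈ closure(D) with z ≠ w. -/

import Mathlib

open MeasureTheory Complex

noncomputable section

/-- `ℂ²` with the Euclidean metric. -/
abbrev C2 := EuclideanSpace ℂ (Fin 2)

instance : MeasurableSpace C2 := borel _
instance : BorelSpace C2 := ⟨rfl⟩

/-- The defining function `ρ(z) = |z₂|² + (Re z₁)² + (Im z₁)⁴ − 1`. -/
def rho (z : C2) : ℝ := ‖z 1‖ ^ 2 + (z 0).re ^ 2 + (z 0).im ^ 4 - 1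

/-- The boundary `bD = {ρ = 0}`. -/
def bD : Set C2 := {z | rho z = 0}

/-- The Cauchy–Leray denominator
`Δ(w,z) = (u₁ − 2i v₁³)(w₁ − z₁) + conj(w₂)(w₂ − z₂)`. -/
def Delta (w z : C2) : ℂ :=
  (((w 0).re : ℂ) - 2 * I * ((w 0).im : ℂ) ^ 3) * (w 0 - z 0)
    + (starRingEnd ℂ) (w 1) * (w 1 - z 1)
/-- The domain `D = {ρ < 0}`. -/
def D : Set C2 := {z | rho z < 0}

/-!
`ρ` is a sum of even powers of the four real coordinates, hence strictly convex, and
`2 Re Δ(w,z) = -dρ_w(z - w)`. The graph of `ρ` lies strictly above its tangent hyperplane at `w`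
away from `w`, so `ρ(w) - 2 Re Δ(w,z) < ρ(z)` for `z ≠ w`; on `bD × closure D` this reads
`0 ≤ -ρ(z) < 2 Re Δ(w,z)`.
-/

lemma tangent_lt_of_strictConvexOn {S : Set ℝ} {f : ℝ → ℝ} {f' x y : ℝ}
    (hf : StrictConvexOn ℝ S f) (hx : x ∈ S) (hy : y ∈ S) (hyx : y ≠ x)
    (hf' : HasDerivWithinAt f f' S x) : f x + f' * (y - x) < f y := by
  rcases hyx.lt_or_gt with hlt | hgt
  · have hslope := hf.slope_lt_of_hasDerivWithinAt hy hx hlt hf'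
    rw [slope_def_field, div_lt_iff₀ (sub_pos.2 hlt)] at hslope
    linarith
  · have hslope := hf.lt_slope_of_hasDerivWithinAt hx hy hgt hf'
    rw [slope_def_field, lt_div_iff₀ (sub_pos.2 hgt)] at hslope
    linarith

section EvenPower

variable {n : ℕ} {a b : ℝ}

lemma even_pow_tangent_lt (hn : Even n) (hn0 : n ≠ 0) (hba : b ≠ a) :
    a ^ n + n * a ^ (n - 1) * (b - a) < b ^ n :=
  tangent_lt_of_strictConvexOn (hn.strictConvexOn_pow hn0) (Set.mem_univ a) (Set.mem_univ b) hba
    (hasDerivAt_pow n a).hasDerivWithinAt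

lemma even_pow_tangent_le (hn : Even n) : a ^ n + n * a ^ (n - 1) * (b - a) ≤ b ^ n := by
  rcases eq_or_ne n 0 with rfl | hn0
  · simp
  rcases eq_or_ne b a with rfl | hba
  · simp
  · exact (even_pow_tangent_lt hn hn0 hba).le

end EvenPower

lemma continuous_rho : Continuous rho := by
  unfold rho
  fun_prop

lemma rho_nonpos_of_mem_closure_D {z : C2} (hz : z ∈ closure D) : rho z ≤ 0 :=
  closure_lt_subset_le continuous_rho continuous_const hz

lemma rho_eq_coordinates (z : C2) :
    rho z = (z 0).re ^ 2 + (z 0).im ^ 4 + (z 1).re ^ 2 + (z 1).im ^ 2 - 1 := by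
  rw [rho, Complex.sq_norm, Complex.normSq_apply]
  ring

lemma Delta_re (w z : C2) :
    (Delta w z).re = (w 0).re * ((w 0).re - (z 0).re) + 2 * (w 0).im ^ 3 * ((w 0).im - (z 0).im)
      + (w 1).re * ((w 1).re - (z 1).re) + (w 1).im * ((w 1).im - (z 1).im) := by
  simp only [Delta, ← ofReal_pow, add_re, sub_re, mul_re, mul_im, sub_im, ofReal_re, ofReal_im,
    I_re, I_im, conj_re, conj_im, re_ofNat, im_ofNat]
  ring

lemma exists_coordinate_ne {w z : C2} (hzw : z ≠ w) :
    (z 0).re ≠ (w 0).re ∨ (z 0).im ≠ (w 0).im ∨ (z 1).re ≠ (w 1).re ∨ (z 1).im ≠ (w 1).im := by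
  contrapose! hzw
  obtain ⟨hre₁, him₁, hre₂, him₂⟩ := hzw
  ext i
  fin_cases i
  · exact Complex.ext hre₁ him₁
  · exact Complex.ext hre₂ him₂

lemma rho_sub_two_mul_re_Delta_lt {w z : C2} (hzw : z ≠ w) :
    rho w - 2 * (Delta w z).re < rho z := by
  have square_le (a b : ℝ) : a ^ 2 + 2 * a * (b - a) ≤ b ^ 2 := by
    simpa using even_pow_tangent_le even_two
  have square_lt {a b : ℝ} (hba : b ≠ a) : a ^ 2 + 2 * a * (b - a) < b ^ 2 := by
    simpa using even_pow_tangent_lt even_two two_ne_zero hba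
  have fourth_le (a b : ℝ) : a ^ 4 + 4 * a ^ 3 * (b - a) ≤ b ^ 4 :=
    even_pow_tangent_le (n := 4) (by decide)
  have fourth_lt {a b : ℝ} (hba : b ≠ a) : a ^ 4 + 4 * a ^ 3 * (b - a) < b ^ 4 :=
    even_pow_tangent_lt (n := 4) (by decide) four_ne_zero hba
  have hre₁ := square_le (w 0).re (z 0).re
  have him₁ := fourth_le (w 0).im (z 0).im
  have hre₂ := square_le (w 1).re (z 1).re
  have him₂ := square_le (w 1).im (z 1).im
  rw [rho_eq_coordinates, rho_eq_coordinates, Delta_re]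
  rcases exists_coordinate_ne hzw with hne | hne | hne | hne
  · linarith [square_lt hne]
  · linarith [fourth_lt hne]
  · linarith [square_lt hne]
  · linarith [square_lt hne]

theorem stmt3_general {w z : C2} (hle : rho z ≤ rho w) (hzw : z ≠ w) :
    0 < (Delta w z).re ∧ Delta w z ≠ 0 := by
  have hpos : 0 < (Delta w z).re := by linarith [rho_sub_two_mul_re_Delta_lt hzw]
  exact ⟨hpos, fun hzero => hpos.ne' (by rw [hzero, zero_re])⟩

/-- For every `w ∈ bD` and every `z` in the closure of `D` with `z ≠ w`,
`Re Δ(w,z) > 0`; in particular `Δ(w,z) ≠ 0`. -/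
theorem stmt3 (w : C2) (hw : w ∈ bD) (z : C2) (hz : z ∈ closure D) (hzw : z ≠ w) :
    0 < (Delta w z).re ∧ Delta w z ≠ 0 := by
  exact stmt3_general ((rho_nonpos_of_mem_closure_D hz).trans_eq (Eq.symm hw)) hzw

end
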